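/- The matrices B = [[0, s], [t, 1 - st]] and P₂ = [[0, s], [t, st - 1]] over ℤ[s^{±1}, t^{±1}] satisfy the three mixed Yang–Baxter equations: (P₂)₁₂ (P₂)₂₃ B₁₂ = B₂₃ (P₂)₁₂ (P₂)₂₃, (P₂)₁₂ B₂₃ (P₂)₁₂ = (P₂)₂₃ B₁₂ (P₂)₂₃, and B₁₂ (P₂)₂₃ (P₂)₁₂ = (P₂)₂₃ (P₂)₁₂ B₂₃. -/

import Mathlib

/- STATEMENT 3: B = [[0, s], [t, 1 - st]] and P₂ = [[0, s], [t, st - 1]] over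
ℤ[s^{±1}, t^{±1}] satisfy the three mixed Yang–Baxter equations
(P₂)₁₂ (P₂)₂₃ B₁₂ = B₂₃ (P₂)₁₂ (P₂)₂₃,  (P₂)₁₂ B₂₃ (P₂)₁₂ = (P₂)₂₃ B₁₂ (P₂)₂₃,
B₁₂ (P₂)₂₃ (P₂)₁₂ = (P₂)₂₃ (P₂)₁₂ B₂₃. -/

open LaurentPolynomial

noncomputable abbrev R₃ : Type := LaurentPolynomial (LaurentPolynomial ℤ)

noncomputable def s₃ : R₃ := T 1
noncomputable def t₃ : R₃ := C (T 1)

noncomputable def m12 (M : Matrix (Fin 2) (Fin 2) R₃) : Matrix (Fin 3) (Fin 3) R₃ :=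
  !![M 0 0, M 0 1, 0; M 1 0, M 1 1, 0; 0, 0, 1]

noncomputable def m23 (M : Matrix (Fin 2) (Fin 2) R₃) : Matrix (Fin 3) (Fin 3) R₃ :=
  !![1, 0, 0; 0, M 0 0, M 0 1; 0, M 1 0, M 1 1]

noncomputable def B₃ : Matrix (Fin 2) (Fin 2) R₃ := !![0, s₃; t₃, 1 - s₃ * t₃]

noncomputable def P₃' : Matrix (Fin 2) (Fin 2) R₃ := !![0, s₃; t₃, s₃ * t₃ - 1]

theorem stmt_3 :
    m12 P₃' * m23 P₃' * m12 B₃ = m23 B₃ * m12 P₃' * m23 P₃' ∧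
    m12 P₃' * m23 B₃ * m12 P₃' = m23 P₃' * m12 B₃ * m23 P₃' ∧
    m12 B₃ * m23 P₃' * m12 P₃' = m23 P₃' * m12 P₃' * m23 B₃ := by
  refine ⟨?_, ?_, ?_⟩ <;>
  · simp only [m12, m23, B₃, P₃']
    generalize s₃ = s
    generalize t₃ = t
    apply Matrix.ext
    intro i j
    fin_cases i <;> fin_cases j <;>
      simp [Matrix.mul_apply, Fin.sum_univ_three] <;> ring
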